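/- There exist constants c > 0 and C ≥ 1 such that for every integer n ≥ 2 there is an instance (J,M) of P||C_max with at most C·n jobs, at most C·n machines, processing times p_j ∈ {1,2} for every job j ∈ J, and opt(J,M) = 2, such that xc(P(J,M)) ≥ 2^{c·n/log n}. -/

import Mathlib

open Finset

noncomputable section

/-- An extended formulation of size `k` (number of inequalities) for `P ⊆ ℝ^ι`. -/
def IsEF {ι : Type} [Fintype ι] (P : Set (ι → ℝ)) (k : ℕ) : Prop :=
  ∃ (e l : ℕ) (A : Matrix (Fin k) (Fin e) ℝ) (b : Fin k → ℝ)
    (C : Matrix (Fin l) (Fin e) ℝ) (d : Fin l → ℝ)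
    (π : (Fin e → ℝ) →ᵃ[ℝ] (ι → ℝ)),
    π '' {y | (∀ r, A.mulVec y r ≤ b r) ∧ (∀ r, C.mulVec y r = d r)} = P

/-- The extension complexity of `P`. -/
noncomputable def xc {ι : Type} [Fintype ι] (P : Set (ι → ℝ)) : ℕ :=
  sInf {k | IsEF P k}

/-- The load of machine `i` under schedule `σ`. -/
def load {n m : ℕ} (p : Fin n → ℕ) (σ : Fin n → Fin m) (i : Fin m) : ℕ :=
  ∑ j, if σ j = i then p j else 0

/-- The makespan of a schedule: the maximum machine load. -/
def makespan {n m : ℕ} (p : Fin n → ℕ) (σ : Fin n → Fin m) : ℕ :=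
  Finset.univ.sup (load p σ)

/-- The optimal makespan of the instance. -/
noncomputable def optMakespan (n m : ℕ) (p : Fin n → ℕ) : ℕ :=
  sInf {t | ∃ σ : Fin n → Fin m, makespan p σ = t}

/-- The 0/1 assignment vector of a schedule, indexed by machine-job pairs. -/
def assignVec {n m : ℕ} (σ : Fin n → Fin m) : Fin m × Fin n → ℝ :=
  fun q => if σ q.2 = q.1 then 1 else 0

/-- `P(J,M)`: the convex hull of all points `(x^σ, T)` where `σ` is a schedule and the
natural number `T` upper-bounds every machine load; the `T`-coordinate is the `none`
coordinate of the ambient space `ℝ^(Option (M × J))`. -/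
def Ppoly (n m : ℕ) (p : Fin n → ℕ) : Set (Option (Fin m × Fin n) → ℝ) :=
  convexHull ℝ {z | ∃ (σ : Fin n → Fin m) (t : ℕ), (∀ i, load p σ i ≤ t) ∧
    z = fun q => Option.elim q (t : ℝ) (fun ij => assignVec σ ij)}

/-!
For every odd set `a`, the number of unit jobs crossing the cut of `a` plus the makespan is at least
`3`. On the schedules that come from matchings `τ`, the slack of this inequality is the slack
`S a τ` of the odd cut inequality of the matching polytope, so by Yannakakis' theorem it suffices to
bound the nonnegative rank of `S` from below, which is done as in Rothvoß's theorem on the matching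
polytope.

Place a triple, a special pair and many further pairs at a random position `g` of the ground set.
Let the rows be the cuts formed by the triple and a set `z` of pairs, and the columns the
matchings which leave a set `w` of pairs unmatched, where only the special pair may lie in both.
Then `S` is `4` if both contain the special pair and `2` otherwise, so the entries avoiding it on
both sides carry `1 / 2` of the weight of those containing it. A rank-one term `u ⊗ v ≤ S`,
however, achieves hardly more than `2 / 5`. Since the special pair is exchangeable with the others,
an exponential moment bound shows that avoiding it is rarely much more likely than containing it
under `u` or under `v`. And a five-cycle through the triple and the special pair preserves the
entries containing the pair, while two steps of it carry the entries avoiding the pair to zeros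
of `S`; so on every orbit the term charges an independent set of a pentagon. The error is
exponentially small in the number of pairs, hence exponentially many terms are needed.
-/

section Farkas

theorem sum_insert_update_smul {R M I : Type*} [Semiring R] [AddCommMonoid M] [Module R M]
    [DecidableEq I] {s : Finset I} {n : I} (hn : n ∉ s) (w : I → R) (c : R) (x : I → M) :
    ∑ i ∈ insert n s, Function.update w n c i • x i = c • x n + ∑ i ∈ s, w i • x i := by
  rw [sum_insert hn, Function.update_self]
  congr 1
  exact sum_congr rfl fun i hi => by rw [Function.update_of_ne (ne_of_mem_of_not_mem hi hn)]

variable {𝕜 I E : Type*} [Field 𝕜] [LinearOrder 𝕜] [IsStrictOrderedRing 𝕜] [AddCommGroup E]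
  [Module 𝕜 E]

theorem exists_apply_eq_one_of_separates {s : Finset I} {φ : I → E →ₗ[𝕜] 𝕜} {χ ψ : E →ₗ[𝕜] 𝕜}
    (h : ∀ x, χ x ≤ 0 → (∀ i ∈ s, φ i x ≤ 0) → ψ x ≤ 0)
    (hs : ¬∀ x, (∀ i ∈ s, φ i x ≤ 0) → ψ x ≤ 0) :
    ∃ x₀, (∀ i ∈ s, φ i x₀ ≤ 0) ∧ χ x₀ = 1 ∧ 0 ≤ ψ x₀ := by
  push Not at hs
  obtain ⟨y, hφ, hψ⟩ := hs
  have hχ : 0 < χ y := by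
    by_contra hle
    exact (h y (not_lt.1 hle) hφ).not_gt hψ
  refine ⟨(χ y)⁻¹ • y, fun i hi => ?_, ?_, ?_⟩
  · rw [map_smul, smul_eq_mul]
    exact mul_nonpos_of_nonneg_of_nonpos (inv_nonneg.2 hχ.le) (hφ i hi)
  · rw [map_smul, smul_eq_mul, inv_mul_cancel₀ hχ.ne']
  · rw [map_smul, smul_eq_mul]
    positivity

theorem farkas_linear (s : Finset I) (φ : I → E →ₗ[𝕜] 𝕜) (ψ : E →ₗ[𝕜] 𝕜)
    (h : ∀ x, (∀ i ∈ s, φ i x ≤ 0) → ψ x ≤ 0) :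
    ∃ w : I → 𝕜, 0 ≤ w ∧ ψ = ∑ i ∈ s, w i • φ i := by
  classical
  induction s using Finset.induction generalizing φ ψ with
  | empty =>
    refine ⟨0, le_rfl, LinearMap.ext fun x => le_antisymm (by simpa using h x) ?_⟩
    simpa using h (-x)
  | insert n s hn ih =>
    by_cases hs : ∀ x, (∀ i ∈ s, φ i x ≤ 0) → ψ x ≤ 0
    · obtain ⟨w, hw, rfl⟩ := ih φ ψ hs
      exact ⟨Function.update w n 0, le_update_iff.2 ⟨le_rfl, fun i _ => hw i⟩,
        by rw [sum_insert_update_smul hn, zero_smul, zero_add]⟩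
    obtain ⟨x₀, hφ, hn₀, hψ⟩ := exists_apply_eq_one_of_separates (χ := φ n)
      (fun x hx hφ => h x (forall_mem_insert _ _ _ |>.2 ⟨hx, hφ⟩)) hs
    -- The functionals below factor through the projection along `x₀` onto the kernel of `φ n`.
    obtain ⟨w, hw, hsum⟩ := ih (fun i => φ i - φ i x₀ • φ n) (ψ - ψ x₀ • φ n) fun x hx => by
      have := h (x - φ n x • x₀) (forall_mem_insert _ _ _ |>.2
        ⟨by simp [hn₀], fun i hi => by simpa [mul_comm] using hx i hi⟩)
      simpa [mul_comm] using this
    have hc : ∑ i ∈ s, w i * φ i x₀ ≤ 0 :=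
      sum_nonpos fun i hi => mul_nonpos_of_nonneg_of_nonpos (hw i) (hφ i hi)
    refine ⟨Function.update w n (ψ x₀ - ∑ i ∈ s, w i * φ i x₀),
      le_update_iff.2 ⟨by simpa using hc.trans hψ, fun i _ => hw i⟩, ?_⟩
    rw [sum_insert_update_smul hn]
    ext x
    have hx := LinearMap.congr_fun hsum x
    simp only [LinearMap.sub_apply, LinearMap.add_apply, LinearMap.smul_apply,
      LinearMap.sum_apply, smul_eq_mul, mul_sub, sum_sub_distrib, ← mul_assoc,
      ← sum_mul] at hx ⊢
    linarith

theorem farkas_affine [Fintype I] (α : I → E →ₗ[𝕜] 𝕜) (β : I → 𝕜) {y₀ : E}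
    (hy₀ : ∀ i, α i y₀ ≤ β i) (γ : E →ₗ[𝕜] 𝕜) (δ : 𝕜) (h : ∀ y, (∀ i, α i y ≤ β i) → γ y ≤ δ) :
    ∃ w : I → 𝕜, ∃ κ, 0 ≤ w ∧ 0 ≤ κ ∧ ∀ y, δ - γ y = ∑ i, w i * (β i - α i y) + κ := by
  let homogenize (a : E →ₗ[𝕜] 𝕜) (b : 𝕜) : E × 𝕜 →ₗ[𝕜] 𝕜 :=
    a ∘ₗ LinearMap.fst 𝕜 E 𝕜 - b • LinearMap.snd 𝕜 E 𝕜
  obtain ⟨w, hw, hsum⟩ := farkas_linear univ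
    (fun o : Option I => o.elim (homogenize 0 1) fun i => homogenize (α i) (β i))
    (homogenize γ δ) (by
      rintro ⟨y, t⟩ hyt
      have ht : 0 ≤ t := by simpa [homogenize] using hyt none (mem_univ _)
      have hα (i : I) : α i y ≤ β i * t := by
        simpa [homogenize] using hyt (some i) (mem_univ _)
      have shifted (ε : 𝕜) (hε : 0 < ε) : γ y + ε * γ y₀ ≤ δ * (t + ε) := by
        have hpos : 0 < t + ε := by linarith
        have := h ((t + ε)⁻¹ • (y + ε • y₀)) fun i => by
          rw [map_smul, map_add, map_smul, smul_eq_mul, smul_eq_mul, inv_mul_le_iff₀ hpos]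
          linarith [hα i, mul_le_mul_of_nonneg_left (hy₀ i) hε.le]
        rw [map_smul, map_add, map_smul, smul_eq_mul, smul_eq_mul, inv_mul_le_iff₀ hpos] at this
        linarith
      have : γ y ≤ δ * t := by
        by_contra! hlt
        have hδ : 0 < δ - γ y₀ + 1 := by linarith [h y₀ hy₀]
        have hε := shifted ((γ y - δ * t) / (δ - γ y₀ + 1)) (div_pos (sub_pos.2 hlt) hδ)
        linarith [div_mul_cancel₀ (γ y - δ * t) hδ.ne', div_pos (sub_pos.2 hlt) hδ]
      simpa [homogenize] using this)
  refine ⟨fun i => w (some i), w none, fun i => hw _, hw _, fun y => ?_⟩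
  have := LinearMap.congr_fun hsum (y, 1)
  simp only [homogenize, Fintype.sum_option, Option.elim, LinearMap.sub_apply, LinearMap.add_apply,
    LinearMap.smul_apply, LinearMap.comp_apply, LinearMap.fst_apply, LinearMap.snd_apply,
    LinearMap.sum_apply, LinearMap.zero_apply, smul_eq_mul, mul_one] at this
  have flip : ∑ i, w (some i) * (β i - α i y) = -∑ i, w (some i) * (α i y - β i) := by
    simp only [← sum_neg_distrib, ← mul_neg, neg_sub]
  linarith

end Farkas

section Factorization

variable {I L E A B : Type*} [Fintype I]

theorem affineMap_eq_slack_combination [Finite L] [Fintype E] (M : Matrix I E ℝ) (b : I → ℝ)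
    (C : Matrix L E ℝ) (d : L → ℝ) (g : (E → ℝ) →ᵃ[ℝ] ℝ)
    (hne : ∃ y, (∀ i, M.mulVec y i ≤ b i) ∧ ∀ l, C.mulVec y l = d l)
    (hg : ∀ y, (∀ i, M.mulVec y i ≤ b i) → (∀ l, C.mulVec y l = d l) → 0 ≤ g y) :
    ∃ w : I → ℝ, ∃ κ, 0 ≤ w ∧ 0 ≤ κ ∧ ∀ y, (∀ l, C.mulVec y l = d l) →
      g y = ∑ i, w i * (b i - M.mulVec y i) + κ := by
  have := Fintype.ofFinite L
  obtain ⟨y₀, hM, hC⟩ := hne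
  have decomp (y : E → ℝ) : g y = g.linear y + g 0 := by simpa using g.map_vadd 0 y
  obtain ⟨w, κ, hw, hκ, h⟩ := farkas_affine
    (Sum.elim (fun i => LinearMap.proj i ∘ₗ M.mulVecLin) <|
      Sum.elim (fun l => LinearMap.proj l ∘ₗ C.mulVecLin)
        fun l => -(LinearMap.proj l ∘ₗ C.mulVecLin))
    (Sum.elim b <| Sum.elim d (-d)) (y₀ := y₀)
    (by
      rintro (i | l | l)
      exacts [by simpa using hM i, by simpa using (hC l).le, by simpa using (hC l).ge])
    (-g.linear) (g 0) fun y hy => by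
      have := hg y (fun i => by simpa using hy (.inl i)) fun l => le_antisymm
        (by simpa using hy (.inr (.inl l))) (by simpa using hy (.inr (.inr l)))
      rw [LinearMap.neg_apply]
      linarith [decomp y]
  refine ⟨fun i => w (.inl i), κ, fun i => hw _, hκ, fun y hy => ?_⟩
  have hwy := h y
  simp only [Fintype.sum_sum_type, Sum.elim_inl, Sum.elim_inr, LinearMap.neg_apply,
    LinearMap.comp_apply, LinearMap.proj_apply, Matrix.mulVecLin_apply, hy, Pi.neg_apply,
    sub_self, mul_zero, sum_const_zero, add_zero] at hwy
  linarith [decomp y]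

/-- A nonnegative factorization `S a b = ∑ i, u i a * v i b` of the matrix `S`, whose inner
dimension is the size of `I`. -/
def HasNonnegFactorization (I : Type*) [Fintype I] (S : A → B → ℝ) : Prop :=
  ∃ (u : I → A → ℝ) (v : I → B → ℝ), 0 ≤ u ∧ 0 ≤ v ∧ ∀ a b, S a b = ∑ i, u i a * v i b

/-- **Yannakakis' theorem**. The extra index `none` carries the constant term of Farkas' lemma. -/
theorem IsEF.hasNonnegFactorization_slack {ι : Type} [Fintype ι] {P : Set (ι → ℝ)} {k : ℕ}
    (hP : IsEF P k) {f : A → (ι → ℝ) →ᵃ[ℝ] ℝ} (hf : ∀ a, ∀ z ∈ P, 0 ≤ f a z)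
    {z : B → ι → ℝ} (hz : ∀ b, z b ∈ P) :
    HasNonnegFactorization (Option (Fin k)) fun a b => f a (z b) := by
  obtain ⟨e, l, M, b, C, d, π, rfl⟩ := hP
  choose y hy hyz using hz
  rcases isEmpty_or_nonempty B with _ | ⟨⟨b₀⟩⟩
  · exact ⟨0, 0, le_rfl, le_rfl, fun _ => isEmptyElim⟩
  choose w κ hw hκ hwκ using fun a => affineMap_eq_slack_combination M b C d ((f a).comp π)
    ⟨y b₀, hy b₀⟩ fun x hM hC => hf a _ ⟨x, ⟨hM, hC⟩, rfl⟩
  refine ⟨fun r a => r.elim (κ a) (w a), fun r c => r.elim 1 fun i => b i - M.mulVec (y c) i,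
    ?_, ?_, fun a c => ?_⟩
  · rintro (_ | i) a
    exacts [hκ a, hw a i]
  · rintro (_ | i) c
    exacts [zero_le_one, sub_nonneg.2 ((hy c).1 i)]
  · have := hwκ a (y c) (hy c).2
    rw [AffineMap.comp_apply, hyz] at this
    simp [Fintype.sum_option, this, add_comm]

end Factorization

section BiasedCoordinates

variable {ι : Type*} [Fintype ι] [DecidableEq ι]

/-- The weight that `F` puts on the subsets containing `i`. -/
def massOn (F : Finset ι → ℝ) (i : ι) : ℝ := ∑ z with i ∈ z, F z

/-- The weight that `F` puts on the subsets avoiding `i`. -/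
def massOff (F : Finset ι → ℝ) (i : ι) : ℝ := ∑ z with i ∉ z, F z

/-- The coordinate `i` is `ε`-biased for `F`: avoiding `i` outweighs containing `i` by at least
an `ε`-fraction of the total weight. -/
def IsBiased (ε : ℝ) (F : Finset ι → ℝ) (i : ι) : Prop := ε * ∑ z, F z ≤ massOff F i - massOn F i

theorem massOn_add_massOff (F : Finset ι → ℝ) (i : ι) : massOn F i + massOff F i = ∑ z, F z :=
  sum_filter_add_sum_filter_not _ _ _

theorem massOn_nonneg {F : Finset ι → ℝ} (hF : 0 ≤ F) (i : ι) : 0 ≤ massOn F i :=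
  sum_nonneg fun z _ => hF z

theorem massOff_nonneg {F : Finset ι → ℝ} (hF : 0 ≤ F) (i : ι) : 0 ≤ massOff F i :=
  sum_nonneg fun z _ => hF z

theorem massOff_le_sum {F : Finset ι → ℝ} (hF : 0 ≤ F) (i : ι) : massOff F i ≤ ∑ z, F z := by
  linarith [massOn_add_massOff F i, massOn_nonneg hF i]

theorem massOff_le_two_pow_mul {F : Finset ι → ℝ} (hF : 0 ≤ F) {A : ℝ} (hA : ∀ z, F z ≤ A)
    (i : ι) : massOff F i ≤ 2 ^ Fintype.card ι * A := by
  refine (massOff_le_sum hF i).trans ((sum_le_card_nsmul univ F A fun z _ => hA z).trans_eq ?_)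
  simp only [card_univ, Fintype.card_finset, nsmul_eq_mul, Nat.cast_pow, Nat.cast_ofNat]

theorem sum_mul_sign (F : Finset ι → ℝ) (i : ι) :
    ∑ z, F z * (if i ∈ z then -1 else 1) = massOff F i - massOn F i := by
  simp only [mul_ite, mul_neg, mul_one, sum_ite, sum_neg_distrib, massOn, massOff]
  ring

theorem sum_exp_sum_sign (ε : ℝ) (Q : Finset ι) :
    ∑ z : Finset ι, Real.exp (∑ i ∈ Q, ε * ((if i ∈ z then -1 else 1) - ε)) =
      2 ^ Fintype.card ι * (Real.exp (-ε ^ 2) * Real.cosh ε) ^ #Q := by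
  let f (s : ℝ) (i : ι) : ℝ := if i ∈ Q then Real.exp (ε * (s - ε)) else 1
  have factor (z : Finset ι) : Real.exp (∑ i ∈ Q, ε * ((if i ∈ z then -1 else 1) - ε)) =
      (∏ i ∈ z, f (-1) i) * ∏ i ∈ univ \ z, f 1 i := by
    rw [Real.exp_sum, ← univ_inter Q, ← prod_ite_mem, ← prod_sdiff (subset_univ z), mul_comm]
    congr 1 <;> refine prod_congr rfl fun i hi => ?_
    · simp only [f, hi, if_true]
    · simp only [f, (mem_sdiff.1 hi).2, if_false]
  have pair (i : ι) : f (-1) i + f 1 i =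
      2 * if i ∈ Q then Real.exp (-ε ^ 2) * Real.cosh ε else 1 := by
    by_cases hi : i ∈ Q <;> simp only [f, hi, if_true, if_false]
    · rw [Real.cosh_eq, mul_div_assoc', mul_div_cancel₀ _ two_ne_zero, mul_add, ← Real.exp_add,
        ← Real.exp_add]
      ring_nf
    · norm_num
  simp only [factor]
  rw [← powerset_univ, ← prod_add]
  simp only [pair, prod_mul_distrib, prod_ite_mem, univ_inter, prod_const, card_univ,
    mul_pow]

theorem sum_le_of_isBiased {ε A : ℝ} (hε : 0 ≤ ε) {F : Finset ι → ℝ} (hF : 0 ≤ F)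
    (hA : ∀ z, F z ≤ A) {Q : Finset ι} (hQ : ∀ i ∈ Q, IsBiased ε F i) :
    ∑ z, F z ≤ A * 2 ^ Fintype.card ι * Real.exp (-(ε ^ 2 * #Q / 2)) := by
  have hA₀ : 0 ≤ A := (hF ∅).trans (hA ∅)
  let tilt (z : Finset ι) : ℝ := ∑ i ∈ Q, ε * ((if i ∈ z then -1 else 1) - ε)
  have tilt_nonneg : 0 ≤ ∑ z, F z * tilt z := by
    have : ∑ z, F z * tilt z = ∑ i ∈ Q, ε * (massOff F i - massOn F i - ε * ∑ z, F z) := by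
      simp only [tilt, mul_sum, sum_comm (t := Q), ← sum_mul_sign, ← sum_sub_distrib]
      exact sum_congr rfl fun i _ => sum_congr rfl fun z _ => by ring
    rw [this]
    exact sum_nonneg fun i hi => mul_nonneg hε (sub_nonneg.2 (hQ i hi))
  calc ∑ z, F z ≤ ∑ z, F z * (tilt z + 1) := by
        simpa only [mul_add, mul_one, sum_add_distrib] using le_add_of_nonneg_left tilt_nonneg
    _ ≤ ∑ z, A * Real.exp (tilt z) := sum_le_sum fun z _ =>
        (mul_le_mul_of_nonneg_left (Real.add_one_le_exp _) (hF z)).trans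
          (mul_le_mul_of_nonneg_right (hA z) (Real.exp_nonneg _))
    _ = A * 2 ^ Fintype.card ι * (Real.exp (-ε ^ 2) * Real.cosh ε) ^ #Q := by
        rw [← mul_sum, sum_exp_sum_sign, mul_assoc]
    _ ≤ A * 2 ^ Fintype.card ι * (Real.exp (-ε ^ 2) * Real.exp (ε ^ 2 / 2)) ^ #Q := by
        gcongr
        exact Real.cosh_le_exp_half_sq ε
    _ = A * 2 ^ Fintype.card ι * Real.exp (-(ε ^ 2 * #Q / 2)) := by
        rw [← Real.exp_add, ← Real.exp_nat_mul]
        ring_nf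

open Classical in
/-- At most `δ * card ι` of the coordinates are biased, unless the total weight is tiny. -/
theorem sum_biased_massOff_le {ε δ A : ℝ} (hε : 0 ≤ ε) (hδ : 0 ≤ δ) {F : Finset ι → ℝ}
    (hF : 0 ≤ F) (hA : ∀ z, F z ≤ A) :
    ∑ i, (if IsBiased ε F i then massOff F i else 0) ≤ Fintype.card ι *
      (δ * ∑ z, F z + A * 2 ^ Fintype.card ι * Real.exp (-(ε ^ 2 * (δ * Fintype.card ι) / 2))) := by
  let Q : Finset ι := {i | IsBiased ε F i}
  have hA₀ : 0 ≤ A := (hF ∅).trans (hA ∅)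
  have hsum : 0 ≤ ∑ z, F z := sum_nonneg fun z _ => hF z
  have few : ∑ i, (if IsBiased ε F i then massOff F i else 0) ≤ #Q * ∑ z, F z := by
    rw [← sum_filter, ← nsmul_eq_mul]
    exact sum_le_card_nsmul _ _ _ fun i _ => massOff_le_sum hF i
  refine few.trans ?_
  rcases le_or_gt (#Q : ℝ) (δ * Fintype.card ι) with hQ | hQ
  · calc (#Q : ℝ) * ∑ z, F z ≤ Fintype.card ι * (δ * ∑ z, F z) := by
          rw [← mul_assoc, mul_comm (_ : ℝ) δ]
          gcongr
      _ ≤ _ := by gcongr; exact le_add_of_nonneg_right (by positivity)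
  · calc (#Q : ℝ) * ∑ z, F z ≤ Fintype.card ι * ∑ z, F z := by
          gcongr
          exact card_le_univ Q
      _ ≤ Fintype.card ι * (A * 2 ^ Fintype.card ι * Real.exp (-(ε ^ 2 * #Q / 2))) := by
          gcongr
          exact sum_le_of_isBiased hε hF hA fun i hi => (mem_filter.1 hi).2
      _ ≤ _ := by
          gcongr
          exact le_add_of_nonneg_of_le (mul_nonneg hδ hsum) (by gcongr)

theorem massOn_comp_finsetCongr (F : Finset ι → ℝ) (e : Equiv.Perm ι) (i : ι) :
    massOn (F ∘ e.finsetCongr) i = massOn F (e i) := by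
  simp only [massOn, sum_filter, ← e.finsetCongr.sum_comp fun z => if e i ∈ z then F z else 0,
    Equiv.finsetCongr_apply, mem_map_equiv, Equiv.symm_apply_apply, Function.comp_apply]

theorem massOff_comp_finsetCongr (F : Finset ι → ℝ) (e : Equiv.Perm ι) (i : ι) :
    massOff (F ∘ e.finsetCongr) i = massOff F (e i) := by
  simp only [massOff, sum_filter, ← e.finsetCongr.sum_comp fun z => if e i ∉ z then F z else 0,
    Equiv.finsetCongr_apply, mem_map_equiv, Equiv.symm_apply_apply, Function.comp_apply]

theorem isBiased_comp_finsetCongr {ε : ℝ} {F : Finset ι → ℝ} (e : Equiv.Perm ι) {i : ι} :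
    IsBiased ε (F ∘ e.finsetCongr) i ↔ IsBiased ε F (e i) := by
  rw [IsBiased, IsBiased, massOn_comp_finsetCongr, massOff_comp_finsetCongr]
  simp only [Function.comp_apply, e.finsetCongr.sum_comp F]

open Classical in
/-- Exchangeability makes one coordinate `o` typical: averaged over `Ω`, it is rarely biased. -/
theorem sum_biased_massOff_mul_le {Ω : Type*} [Fintype Ω] {ε δ A Y : ℝ} (hε : 0 ≤ ε) (hδ : 0 ≤ δ)
    {U : Ω → Finset ι → ℝ} (hU : 0 ≤ U) (hA : ∀ g z, U g z ≤ A) {y : Ω → ℝ} (hy : 0 ≤ y)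
    (hY : ∀ g, y g ≤ Y) {o : ι} (s : ι → Equiv.Perm Ω)
    (hUs : ∀ i g, U (s i g) = U g ∘ (Equiv.swap o i).finsetCongr) (hys : ∀ i g, y (s i g) = y g) :
    ∑ g, (if IsBiased ε (U g) o then massOff (U g) o else 0) * y g ≤
      δ * ∑ g, (∑ z, U g z) * y g + Fintype.card Ω *
        (A * 2 ^ Fintype.card ι * Real.exp (-(ε ^ 2 * (δ * Fintype.card ι) / 2)) * Y) := by
  set err := A * 2 ^ Fintype.card ι * Real.exp (-(ε ^ 2 * (δ * Fintype.card ι) / 2))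
  let bias (g : Ω) (i : ι) : ℝ := if IsBiased ε (U g) i then massOff (U g) i else 0
  have hN : (0 : ℝ) < Fintype.card ι := Nat.cast_pos.2 (Fintype.card_pos_iff.2 ⟨o⟩)
  have bias_shift (i : ι) (g : Ω) : bias (s i g) o = bias g i := by
    simp only [bias, hUs, isBiased_comp_finsetCongr, massOff_comp_finsetCongr,
      Equiv.swap_apply_left]
  have average : Fintype.card ι * ∑ g, bias g o * y g = ∑ g, (∑ i, bias g i) * y g := by
    have (i : ι) : ∑ g, bias g o * y g = ∑ g, bias g i * y g := by
      rw [← Equiv.sum_comp (s i)]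
      simp only [bias_shift, hys]
    simp only [sum_mul]
    rw [sum_comm, ← sum_congr rfl fun i _ => this i, sum_const, card_univ, nsmul_eq_mul]
  refine le_of_mul_le_mul_left ?_ hN
  rw [average]
  calc ∑ g, (∑ i, bias g i) * y g
      ≤ ∑ g, Fintype.card ι * (δ * ∑ z, U g z + err) * y g := by
        gcongr with g
        exacts [hy g, sum_biased_massOff_le hε hδ (hU g) (hA g)]
    _ = Fintype.card ι * (δ * ∑ g, (∑ z, U g z) * y g + ∑ g, err * y g) := by
        rw [mul_sum, ← sum_add_distrib, mul_sum]
        exact sum_congr rfl fun g _ => by ring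
    _ ≤ _ := by
        rcases isEmpty_or_nonempty Ω with _ | ⟨⟨g₀⟩⟩
        · simp
        have herr : 0 ≤ err := by
          have : 0 ≤ A := (hU g₀ ∅).trans (hA g₀ ∅)
          positivity
        gcongr
        rw [← nsmul_eq_mul, ← card_univ]
        exact sum_le_card_nsmul _ _ _ fun g _ => mul_le_mul_of_nonneg_left (hY g) herr

end BiasedCoordinates

section Rectangles

variable {Ω : Type*}

theorem five_sum_le_two_mul {a b c d e M : ℝ} (ha : a ≤ M) (hb : b ≤ M) (hc : c ≤ M) (hd : d ≤ M)
    (he : e ≤ M) (hac : a = 0 ∨ c = 0) (hbd : b = 0 ∨ d = 0) (hce : c = 0 ∨ e = 0)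
    (hda : d = 0 ∨ a = 0) (heb : e = 0 ∨ b = 0) : a + b + c + d + e ≤ 2 * M := by
  rcases hac with hac | hac <;> rcases hbd with hbd | hbd <;> rcases hce with hce | hce <;>
    rcases hda with hda | hda <;> rcases heb with heb | heb <;> linarith

/-- On every orbit of `ρ`, the support of `h` is independent in the pentagon formed by the pairs
`{g, ρ² g}`, so it contains at most two of five points. -/
theorem sum_le_of_pentagon [Fintype Ω] {ρ : Equiv.Perm Ω} (hρ : ρ ^ 5 = 1) {h H : Ω → ℝ}
    (h_le : h ≤ H) (H_inv : ∀ g, H (ρ g) = H g) (indep : ∀ g, h g = 0 ∨ h (ρ (ρ g)) = 0) :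
    ∑ g, h g ≤ 2 / 5 * ∑ g, H g := by
  have ρ5 (g : Ω) : ρ (ρ (ρ (ρ (ρ g)))) = g := by
    simpa only [pow_succ, pow_zero, one_mul, Equiv.Perm.mul_apply, Equiv.Perm.one_apply] using
      Equiv.congr_fun hρ g
  have orbit : 5 * ∑ g, h g =
      ∑ g, (h g + h (ρ g) + h (ρ (ρ g)) + h (ρ (ρ (ρ g))) + h (ρ (ρ (ρ (ρ g))))) := by
    simp only [sum_add_distrib]
    rw [Equiv.sum_comp ρ fun g => h (ρ (ρ (ρ g))), Equiv.sum_comp ρ fun g => h (ρ (ρ g)),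
      Equiv.sum_comp ρ fun g => h (ρ g), Equiv.sum_comp ρ h]
    ring
  have pointwise (g : Ω) :
      h g + h (ρ g) + h (ρ (ρ g)) + h (ρ (ρ (ρ g))) + h (ρ (ρ (ρ (ρ g)))) ≤ 2 * H g := by
    have le (x : Ω) (hx : H x = H g) : h x ≤ H g := hx ▸ h_le x
    refine five_sum_le_two_mul (h_le g) (le _ ?_) (le _ ?_) (le _ ?_) (le _ ?_)
      (indep _) (indep _) (indep _) ?_ ?_
    any_goals simp only [H_inv]
    · simpa only [ρ5] using indep (ρ (ρ (ρ g)))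
    · simpa only [ρ5] using indep (ρ (ρ (ρ (ρ g))))
  linarith [orbit, sum_le_sum fun g (_ : g ∈ univ) => pointwise g, mul_sum univ H 2]

variable {ι : Type*} [Fintype ι] [DecidableEq ι]

/-- The symmetries of one rank-one term of a nonnegative factorization of the slack matrix,
restricted along `Ω` to rows and columns indexed by subsets of `ι`: `U g` and `V g` are the two
factors, `s i` exchanges `o` and `i` in the rows, `t i` exchanges them in the columns, and `ρ`
is a five-cycle carrying the entries which avoid `o` to entries which vanish after two steps. -/
structure IsPentagonal (U V : Ω → Finset ι → ℝ) (o : ι) (s t : ι → Equiv.Perm Ω)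
    (ρ : Equiv.Perm Ω) : Prop where
  nonneg_left : 0 ≤ U
  nonneg_right : 0 ≤ V
  left_s : ∀ i g, U (s i g) = U g ∘ (Equiv.swap o i).finsetCongr
  right_s : ∀ i g w, o ∉ w → V (s i g) w = V g w
  left_t : ∀ i g z, o ∉ z → U (t i g) z = U g z
  right_t : ∀ i g, V (t i g) = V g ∘ (Equiv.swap o i).finsetCongr
  pow_five : ρ ^ 5 = 1
  left_ρ : ∀ g z, o ∈ z → U (ρ g) z = U g z
  right_ρ : ∀ g w, o ∈ w → V (ρ g) w = V g w
  vanish : ∀ g z w, o ∉ z → o ∉ w → U (ρ (ρ g)) z * V g w = 0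

variable {U V : Ω → Finset ι → ℝ} {o : ι} {s t : ι → Equiv.Perm Ω} {ρ : Equiv.Perm Ω}

theorem massOff_le_of_not_isBiased {ε : ℝ} (hε : ε < 1) {F : Finset ι → ℝ}
    (h : ¬IsBiased ε F o) : massOff F o ≤ (1 + ε) / (1 - ε) * massOn F o := by
  rw [div_mul_eq_mul_div, le_div_iff₀ (sub_pos.2 hε)]
  rw [IsBiased, ← massOn_add_massOff F o] at h
  linarith

namespace IsPentagonal

theorem massOff_eq_zero (h : IsPentagonal U V o s t ρ) {g : Ω} (hV : massOff (V g) o ≠ 0) :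
    massOff (U (ρ (ρ g))) o = 0 := by
  obtain ⟨w, hw, hne⟩ := exists_ne_zero_of_sum_ne_zero hV
  exact sum_eq_zero fun z hz => (mul_eq_zero.1
    (h.vanish g z w (mem_filter.1 hz).2 (mem_filter.1 hw).2)).resolve_right hne

variable [Fintype Ω]

open Classical in
theorem sum_unbiased_le (h : IsPentagonal U V o s t ρ) {ε : ℝ} (hε₀ : 0 ≤ ε) (hε₁ : ε < 1) :
    ∑ g, (if ¬IsBiased ε (U g) o ∧ ¬IsBiased ε (V g) o then
      massOff (U g) o * massOff (V g) o else 0) ≤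
      2 / 5 * ((1 + ε) / (1 - ε)) ^ 2 * ∑ g, massOn (U g) o * massOn (V g) o := by
  have hr : 0 ≤ (1 + ε) / (1 - ε) := div_nonneg (by linarith) (by linarith)
  have on_U (g : Ω) : 0 ≤ massOn (U g) o := massOn_nonneg (h.nonneg_left g) o
  have on_V (g : Ω) : 0 ≤ massOn (V g) o := massOn_nonneg (h.nonneg_right g) o
  have off_V (g : Ω) : 0 ≤ massOff (V g) o := massOff_nonneg (h.nonneg_right g) o
  rw [mul_assoc, mul_sum]
  refine sum_le_of_pentagon h.pow_five (fun g => ?_) (fun g => ?_) fun g => ?_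
  · dsimp only
    split_ifs with hg
    · calc massOff (U g) o * massOff (V g) o
          ≤ ((1 + ε) / (1 - ε) * massOn (U g) o) * ((1 + ε) / (1 - ε) * massOn (V g) o) :=
            mul_le_mul (massOff_le_of_not_isBiased hε₁ hg.1)
              (massOff_le_of_not_isBiased hε₁ hg.2) (off_V g) (mul_nonneg hr (on_U g))
        _ = _ := by ring
    · exact mul_nonneg (sq_nonneg _) (mul_nonneg (on_U g) (on_V g))
  · have hU : massOn (U (ρ g)) o = massOn (U g) o :=
      sum_congr rfl fun z hz => h.left_ρ g z (mem_filter.1 hz).2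
    have hV : massOn (V (ρ g)) o = massOn (V g) o :=
      sum_congr rfl fun w hw => h.right_ρ g w (mem_filter.1 hw).2
    rw [hU, hV]
  · rcases eq_or_ne (massOff (V g) o) 0 with hV | hV
    · exact .inl (by rw [hV, mul_zero, ite_self])
    · exact .inr (by rw [h.massOff_eq_zero hV, zero_mul, ite_self])

theorem sum_massOff_mul_massOff_le (h : IsPentagonal U V o s t ρ) {ε δ A B : ℝ} (hε₀ : 0 ≤ ε)
    (hε₁ : ε < 1) (hδ : 0 ≤ δ) (hA : ∀ g z, U g z ≤ A) (hB : ∀ g w, V g w ≤ B) :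
    ∑ g, massOff (U g) o * massOff (V g) o ≤
      δ * ∑ g, (∑ z, U g z) * massOff (V g) o + δ * ∑ g, massOff (U g) o * ∑ w, V g w +
      2 / 5 * ((1 + ε) / (1 - ε)) ^ 2 * ∑ g, massOn (U g) o * massOn (V g) o +
      2 * (Fintype.card Ω * (A * B * 4 ^ Fintype.card ι *
        Real.exp (-(ε ^ 2 * (δ * Fintype.card ι) / 2)))) := by
  classical
  let biasedU (g : Ω) : ℝ := if IsBiased ε (U g) o then massOff (U g) o else 0
  let biasedV (g : Ω) : ℝ := if IsBiased ε (V g) o then massOff (V g) o else 0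
  have off_U (g : Ω) : 0 ≤ massOff (U g) o := massOff_nonneg (h.nonneg_left g) o
  have off_V (g : Ω) : 0 ≤ massOff (V g) o := massOff_nonneg (h.nonneg_right g) o
  have hU := sum_biased_massOff_mul_le hε₀ hδ h.nonneg_left hA off_V
    (fun g => massOff_le_two_pow_mul (h.nonneg_right g) (hB g) o) s h.left_s
    fun i g => sum_congr rfl fun w hw => h.right_s i g w (mem_filter.1 hw).2
  have hV := sum_biased_massOff_mul_le hε₀ hδ h.nonneg_right hB off_U
    (fun g => massOff_le_two_pow_mul (h.nonneg_left g) (hA g) o) t h.right_t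
    fun i g => sum_congr rfl fun z hz => h.left_t i g z (mem_filter.1 hz).2
  have split (g : Ω) : massOff (U g) o * massOff (V g) o ≤
      biasedU g * massOff (V g) o + biasedV g * massOff (U g) o +
      if ¬IsBiased ε (U g) o ∧ ¬IsBiased ε (V g) o then
        massOff (U g) o * massOff (V g) o else 0 := by
    have := mul_nonneg (off_U g) (off_V g)
    by_cases h₁ : IsBiased ε (U g) o <;> by_cases h₂ : IsBiased ε (V g) o <;>
      simp only [biasedU, biasedV, h₁, h₂, not_true, not_false_eq_true, and_self, and_true,
        and_false, if_true, if_false] <;> linarith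
  refine (sum_le_sum fun g _ => split g).trans ?_
  rw [sum_add_distrib, sum_add_distrib]
  refine (add_le_add_three hU hV (h.sum_unbiased_le hε₀ hε₁)).trans_eq ?_
  simp only [mul_comm (∑ w, V _ w), show (4 : ℝ) = 2 * 2 by norm_num, mul_pow]
  ring

end IsPentagonal

end Rectangles

section CutSlack

open scoped Pointwise

variable {V : Type*}

theorem involutive_conj {τ : Equiv.Perm V} (hτ : Function.Involutive τ) (g : Equiv.Perm V) :
    Function.Involutive (g * τ * g⁻¹) := fun v => by
  simp [hτ (g.symm v)]

variable [DecidableEq V]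

/-- For an involution `τ`, viewed as a partial matching of `V`: the number of elements of `a` that
are unmatched or matched across the boundary of `a`. -/
def cutCost (a : Finset V) (τ : Equiv.Perm V) : ℕ := #{v ∈ a | τ v = v ∨ τ v ∉ a}

/-- The slack of the odd cut inequality of `a`, as in the matching polytope, at the matching `τ`:
at least one element of an odd set is unmatched or matched outside of it. -/
def oddCutSlack (a : {a : Finset V // Odd #a}) (τ : {τ : Equiv.Perm V // Function.Involutive τ}) :
    ℝ := cutCost a.1 τ.1 - 1

theorem cutCost_smul (g : Equiv.Perm V) (a : Finset V) (τ : Equiv.Perm V) :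
    cutCost (g • a) τ = cutCost a (g⁻¹ * τ * g) := by
  rw [cutCost, ← card_smul_finset g⁻¹]
  congr 1
  ext v
  rw [mem_inv_smul_finset_iff]
  rw [mem_filter, mem_filter, smul_mem_smul_finset_iff]
  simp only [Equiv.Perm.smul_def, Equiv.Perm.mul_apply, Equiv.Perm.inv_eq_iff_eq,
    ← inv_smul_mem_iff (a := g) (b := τ _)]

end CutSlack

section Configuration

open scoped Pointwise

variable {κ : Type*}

/-- The slots of the configuration: the special slot `none`, slots for the cuts and slots for the
matchings. -/
abbrev Slot (κ : Type*) : Type _ := Option (κ ⊕ κ)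

/-- The ground set of the configuration: a triple and a pair of elements for every slot. -/
abbrev Base (κ : Type*) : Type _ := Fin 3 ⊕ (Slot κ × Bool)

theorem card_base [Fintype κ] : Fintype.card (Base κ) = 4 * Fintype.card κ + 5 := by
  simp only [Fintype.card_sum, Fintype.card_fin, Fintype.card_prod, Fintype.card_option,
    Fintype.card_bool]
  ring

/-- The slots available to a cut. -/
def cutSlot : Option κ ↪ Slot κ := Function.Embedding.inl.optionMap

/-- The slots available to a matching; only `none` is also available to a cut. -/
def matchingSlot : Option κ ↪ Slot κ := Function.Embedding.inr.optionMap

/-- The triple together with the pairs in the slots of `a`. -/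
def cutSet (a : Finset (Slot κ)) : Finset (Base κ) := univ.disjSum (a ×ˢ univ)

theorem inl_mem_cutSet (a : Finset (Slot κ)) (i : Fin 3) : .inl i ∈ cutSet a := by
  simp [cutSet]

theorem inr_mem_cutSet {a : Finset (Slot κ)} {p : Slot κ} {b : Bool} :
    .inr (p, b) ∈ cutSet a ↔ p ∈ a := by
  simp [cutSet]

theorem card_cutSet (a : Finset (Slot κ)) : #(cutSet a) = 3 + 2 * #a := by
  simp [cutSet, card_disjSum, card_product, mul_comm]

/-- The five-cycle through the triple and the special pair. -/
def pentagonCycle (κ : Type*) : Equiv.Perm (Base κ) where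
  toFun
    | .inl 0 => .inl 1
    | .inl 1 => .inl 2
    | .inl 2 => .inr (none, false)
    | .inr (none, false) => .inr (none, true)
    | .inr (none, true) => .inl 0
    | .inr (some p, b) => .inr (some p, b)
  invFun
    | .inl 0 => .inr (none, true)
    | .inl 1 => .inl 0
    | .inl 2 => .inl 1
    | .inr (none, false) => .inl 2
    | .inr (none, true) => .inr (none, false)
    | .inr (some p, b) => .inr (some p, b)
  left_inv := by rintro (i | ⟨_ | p, _ | _⟩) <;> (try fin_cases i) <;> rfl
  right_inv := by rintro (i | ⟨_ | p, _ | _⟩) <;> (try fin_cases i) <;> rfl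

theorem pentagonCycle_pow_five : pentagonCycle κ ^ 5 = 1 := by
  ext1 (i | ⟨_ | p, _ | _⟩) <;> (try fin_cases i) <;> rfl

variable [DecidableEq κ]

/-- The matching of the two elements of every pair whose slot is not in `w`. -/
def pairing (w : Finset (Slot κ)) : Equiv.Perm (Base κ) :=
  Function.Involutive.toPerm
    (Sum.map id fun q => (q.1, if q.1 ∈ w then q.2 else !q.2)) <| by
      rintro (i | ⟨p, b⟩)
      · rfl
      · by_cases hp : p ∈ w <;> simp [hp]

theorem pairing_inl (w : Finset (Slot κ)) (i : Fin 3) : pairing w (.inl i) = .inl i := rfl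

theorem pairing_inr (w : Finset (Slot κ)) (p : Slot κ) (b : Bool) :
    pairing w (.inr (p, b)) = .inr (p, if p ∈ w then b else !b) := rfl

theorem pairing_involutive (w : Finset (Slot κ)) : Function.Involutive (pairing w) :=
  Function.Involutive.toPerm_involutive _

theorem odd_card_smul_cutSet (g : Equiv.Perm (Base κ)) (a : Finset (Slot κ)) :
    Odd #(g • cutSet a) := by
  rw [card_smul_finset, card_cutSet]
  exact ⟨#a + 1, by ring⟩

theorem cutCost_cutSet_pairing (a w : Finset (Slot κ)) :
    cutCost (cutSet a) (pairing w) = 3 + 2 * #(a ∩ w) := by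
  rw [cutCost, ← card_cutSet]
  congr 1
  ext (i | ⟨p, b⟩)
  · simp only [mem_filter, inl_mem_cutSet, pairing_inl, true_or, and_self]
  · by_cases hp : p ∈ w <;> by_cases ha : p ∈ a <;>
      simp [inr_mem_cutSet, pairing_inr, hp, ha]

theorem card_map_cutSlot_inter_map_matchingSlot (z w : Finset (Option κ)) :
    #(z.map cutSlot ∩ w.map matchingSlot) = if none ∈ z ∧ none ∈ w then 1 else 0 := by
  have subset : z.map cutSlot ∩ w.map matchingSlot ⊆ {none} := by
    rintro (_ | _ | _) <;> simp [cutSlot, matchingSlot]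
  have mem : none ∈ z.map cutSlot ∩ w.map matchingSlot ↔ none ∈ z ∧ none ∈ w := by
    simp [cutSlot, matchingSlot]
  split_ifs with h
  · rw [subset.antisymm (singleton_subset_iff.2 (mem.2 h)), card_singleton]
  · rw [card_eq_zero]
    refine eq_empty_of_forall_notMem fun p hp => h (mem.1 ?_)
    rwa [← mem_singleton.1 (subset hp)]

/-- The permutation of the pairs induced by a permutation of the slots. -/
def slotPerm (σ : Equiv.Perm (Slot κ)) : Equiv.Perm (Base κ) :=
  (Equiv.refl _).sumCongr (σ.prodCongr (Equiv.refl _))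

theorem slotPerm_smul_cutSet (σ : Equiv.Perm (Slot κ)) (a : Finset (Slot κ)) :
    slotPerm σ • cutSet a = cutSet (σ • a) := by
  ext x
  rw [← inv_smul_mem_iff]
  rcases x with i | ⟨p, b⟩
  · exact iff_of_true (inl_mem_cutSet a i) (inl_mem_cutSet _ i)
  · rw [inr_mem_cutSet, ← inv_smul_mem_iff]
    exact inr_mem_cutSet

theorem slotPerm_conj_pairing (σ : Equiv.Perm (Slot κ)) (w : Finset (Slot κ)) :
    slotPerm σ * pairing w * (slotPerm σ)⁻¹ = pairing (σ • w) := by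
  rw [mul_inv_eq_iff_eq_mul]
  ext1 (i | ⟨p, b⟩)
  · rfl
  · have : σ p ∈ σ • w ↔ p ∈ w := smul_mem_smul_finset_iff σ
    simp [slotPerm, pairing_inr, this]

theorem swap_smul_map {α β : Type*} [DecidableEq α] [DecidableEq β] (f : α ↪ β) (i j : α)
    (z : Finset α) :
    Equiv.swap (f i) (f j) • z.map f = ((Equiv.swap i j).finsetCongr z).map f := by
  ext x
  simp only [smul_finset_def, Equiv.finsetCongr_apply, mem_image, mem_map, Equiv.Perm.smul_def]
  simp [← f.injective.map_swap]

theorem swap_smul_eq_self {α : Type*} [DecidableEq α] {i j : α} {z : Finset α} (hi : i ∉ z)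
    (hj : j ∉ z) : Equiv.swap i j • z = z := by
  refine (smul_finset_def ..).trans ((image_congr fun x hx => ?_).trans image_id)
  exact Equiv.swap_apply_of_ne_of_ne (ne_of_mem_of_not_mem hx hi) (ne_of_mem_of_not_mem hx hj)

theorem pentagonCycle_smul_cutSet {a : Finset (Slot κ)} (ha : none ∈ a) :
    pentagonCycle κ • cutSet a = cutSet a := by
  refine eq_of_subset_of_card_le ?_ (card_smul_finset _ _).ge
  rw [smul_finset_def, image_subset_iff]
  rintro (i | ⟨_ | p, _ | _⟩) hx
  · fin_cases i
    exacts [inl_mem_cutSet a 1, inl_mem_cutSet a 2, inr_mem_cutSet.2 ha]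
  exacts [inr_mem_cutSet.2 ha, inl_mem_cutSet a 0, hx, hx]

theorem pentagonCycle_conj_pairing {w : Finset (Slot κ)} (hw : none ∈ w) :
    pentagonCycle κ * pairing w * (pentagonCycle κ)⁻¹ = pairing w := by
  rw [mul_inv_eq_iff_eq_mul]
  ext1 (i | ⟨_ | p, b⟩)
  · fin_cases i <;> simp [pentagonCycle, pairing_inl, pairing_inr, hw]
  · cases b <;> simp [pentagonCycle, pairing_inl, pairing_inr, hw]
  · simp [pentagonCycle, pairing_inr]

theorem cutCost_pentagonCycle_sq_smul_cutSet {a w : Finset (Slot κ)} (ha : none ∉ a)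
    (hw : none ∉ w) (haw : Disjoint a w) :
    cutCost (pentagonCycle κ • pentagonCycle κ • cutSet a) (pairing w) = 1 := by
  rw [cutCost_smul, cutCost_smul]
  set τ := (pentagonCycle κ)⁻¹ * ((pentagonCycle κ)⁻¹ * pairing w * pentagonCycle κ) *
    pentagonCycle κ
  have τ_zero : τ (.inl 0) = .inl 0 := rfl
  have τ_one : τ (.inl 1) = .inl 2 := by
    simp [τ, Equiv.Perm.inv_def, pentagonCycle, pairing_inr, hw]
  have τ_two : τ (.inl 2) = .inl 1 := by
    simp [τ, Equiv.Perm.inv_def, pentagonCycle, pairing_inr, hw]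
  have τ_pair (q : κ ⊕ κ) (b : Bool) (hq : some q ∉ w) :
      τ (.inr (some q, b)) = .inr (some q, !b) := by
    simp [τ, Equiv.Perm.inv_def, pentagonCycle, pairing_inr, hq]
  rw [cutCost, card_eq_one]
  refine ⟨.inl 0, ?_⟩
  ext (i | ⟨_ | q, b⟩)
  · fin_cases i <;> simp [τ_zero, τ_one, τ_two, inl_mem_cutSet]
  · simp [inr_mem_cutSet, ha]
  · by_cases hq : some q ∈ a
    · simp [inr_mem_cutSet, τ_pair q b (disjoint_left.1 haw hq), hq]
    · simp [inr_mem_cutSet, hq]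

/-- The odd set in position `g` which avoids the cut slots outside `z`. -/
def row (g : Equiv.Perm (Base κ)) (z : Finset (Option κ)) : {a : Finset (Base κ) // Odd #a} :=
  ⟨g • cutSet (z.map cutSlot), odd_card_smul_cutSet _ _⟩

/-- The matching in position `g` which leaves exactly the triple and the pairs in the matching
slots of `w` unmatched. -/
def col (g : Equiv.Perm (Base κ)) (w : Finset (Option κ)) :
    {τ : Equiv.Perm (Base κ) // Function.Involutive τ} :=
  ⟨g * pairing (w.map matchingSlot) * g⁻¹, involutive_conj (pairing_involutive _) g⟩

theorem oddCutSlack_row_col (g g' : Equiv.Perm (Base κ)) (z w : Finset (Option κ)) :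
    oddCutSlack (row (g * g') z) (col g w) =
      cutCost (g' • cutSet (z.map cutSlot)) (pairing (w.map matchingSlot)) - 1 := by
  simp only [oddCutSlack, row, col, mul_smul, cutCost_smul g, mul_assoc, inv_mul_cancel, mul_one,
    inv_mul_cancel_left]

theorem oddCutSlack_row_col_self (g : Equiv.Perm (Base κ)) (z w : Finset (Option κ)) :
    oddCutSlack (row g z) (col g w) = if none ∈ z ∧ none ∈ w then 4 else 2 := by
  have := oddCutSlack_row_col g 1 z w
  rw [mul_one, one_smul, cutCost_cutSet_pairing,
    card_map_cutSlot_inter_map_matchingSlot] at this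
  rw [this]
  split_ifs <;> norm_num

theorem oddCutSlack_row_pentagonCycle_sq_col (g : Equiv.Perm (Base κ)) {z w : Finset (Option κ)}
    (hz : none ∉ z) (hw : none ∉ w) :
    oddCutSlack (row (g * (pentagonCycle κ * pentagonCycle κ)) z) (col g w) = 0 := by
  rw [oddCutSlack_row_col, mul_smul, cutCost_pentagonCycle_sq_smul_cutSet, Nat.cast_one, sub_self]
  · simpa [cutSlot] using hz
  · simpa [matchingSlot] using hw
  · rw [disjoint_iff_inter_eq_empty, ← card_eq_zero, card_map_cutSlot_inter_map_matchingSlot,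
      if_neg fun h => hz h.1]

theorem coe_row_mul (g h : Equiv.Perm (Base κ)) (z : Finset (Option κ)) :
    (row (g * h) z : Finset (Base κ)) = g • h • cutSet (z.map cutSlot) := mul_smul ..

theorem coe_col_mul (g h : Equiv.Perm (Base κ)) (w : Finset (Option κ)) :
    (col (g * h) w : Equiv.Perm (Base κ)) =
      g * (h * pairing (w.map matchingSlot) * h⁻¹) * g⁻¹ := by
  simp only [col, mul_inv_rev, mul_assoc]

theorem row_mul_slotPerm_swap (g : Equiv.Perm (Base κ)) (i : Option κ) (z : Finset (Option κ)) :
    row (g * slotPerm (.swap none (cutSlot i))) z = row g ((Equiv.swap none i).finsetCongr z) := by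
  refine Subtype.ext ((coe_row_mul ..).trans ?_)
  rw [slotPerm_smul_cutSet]
  exact congr_arg (g • cutSet ·) (swap_smul_map cutSlot none i z)

theorem col_mul_slotPerm_swap (g : Equiv.Perm (Base κ)) (i : Option κ) (w : Finset (Option κ)) :
    col (g * slotPerm (.swap none (matchingSlot i))) w =
      col g ((Equiv.swap none i).finsetCongr w) := by
  refine Subtype.ext ((coe_col_mul ..).trans ?_)
  rw [slotPerm_conj_pairing]
  exact congr_arg (g * pairing · * g⁻¹) (swap_smul_map matchingSlot none i w)

theorem row_mul_slotPerm_swap_of_notMem (g : Equiv.Perm (Base κ)) (i : Option κ)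
    {z : Finset (Option κ)} (hz : none ∉ z) :
    row (g * slotPerm (.swap none (matchingSlot i))) z = row g z := by
  refine Subtype.ext ((coe_row_mul ..).trans ?_)
  rw [slotPerm_smul_cutSet, swap_smul_eq_self, row]
  all_goals cases i <;> simp [cutSlot, matchingSlot, hz]

theorem col_mul_slotPerm_swap_of_notMem (g : Equiv.Perm (Base κ)) (i : Option κ)
    {w : Finset (Option κ)} (hw : none ∉ w) :
    col (g * slotPerm (.swap none (cutSlot i))) w = col g w := by
  refine Subtype.ext ((coe_col_mul ..).trans ?_)
  rw [slotPerm_conj_pairing, swap_smul_eq_self, col]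
  all_goals cases i <;> simp [cutSlot, matchingSlot, hw]

theorem row_mul_pentagonCycle (g : Equiv.Perm (Base κ)) {z : Finset (Option κ)}
    (hz : none ∈ z) : row (g * pentagonCycle κ) z = row g z := by
  refine Subtype.ext ((coe_row_mul ..).trans ?_)
  rw [pentagonCycle_smul_cutSet, row]
  simpa [cutSlot] using hz

theorem col_mul_pentagonCycle (g : Equiv.Perm (Base κ)) {w : Finset (Option κ)}
    (hw : none ∈ w) : col (g * pentagonCycle κ) w = col g w := by
  refine Subtype.ext ((coe_col_mul ..).trans ?_)
  rw [pentagonCycle_conj_pairing, col]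
  simpa [matchingSlot] using hw

theorem isPentagonal_row_col {u : {a : Finset (Base κ) // Odd #a} → ℝ}
    {v : {τ : Equiv.Perm (Base κ) // Function.Involutive τ} → ℝ} (hu : 0 ≤ u) (hv : 0 ≤ v)
    (huv : ∀ a τ, u a * v τ ≤ oddCutSlack a τ) :
    IsPentagonal (fun g z => u (row g z)) (fun g w => v (col g w)) none
      (fun i => Equiv.mulRight (slotPerm (.swap none (cutSlot i))))
      (fun i => Equiv.mulRight (slotPerm (.swap none (matchingSlot i))))
      (Equiv.mulRight (pentagonCycle κ)) where
  nonneg_left _ _ := hu _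
  nonneg_right _ _ := hv _
  left_s i g := funext fun z => congr_arg u (row_mul_slotPerm_swap g i z)
  right_s i g _ hw := congr_arg v (col_mul_slotPerm_swap_of_notMem g i hw)
  left_t i g _ hz := congr_arg u (row_mul_slotPerm_swap_of_notMem g i hz)
  right_t i g := funext fun w => congr_arg v (col_mul_slotPerm_swap g i w)
  pow_five := by rw [Equiv.pow_mulRight, pentagonCycle_pow_five, Equiv.mulRight_one]
  left_ρ g _ hz := congr_arg u (row_mul_pentagonCycle g hz)
  right_ρ g _ hw := congr_arg v (col_mul_pentagonCycle g hw)
  vanish g z w hz hw := by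
    refine (mul_nonneg (hu _) (hv _)).antisymm' ((huv _ _).trans_eq ?_)
    rw [← oddCutSlack_row_pentagonCycle_sq_col g hz hw, ← mul_assoc]
    rfl

end Configuration

section NonnegRank

theorem sum_sum_mul_sum_eq_of_factorization {A B I X Y : Type*} [Fintype I] {S : A → B → ℝ}
    {u : I → A → ℝ} {v : I → B → ℝ} (hS : ∀ a b, S a b = ∑ i, u i a * v i b) {f : X → A}
    {g : Y → B} {s : Finset X} {t : Finset Y} {c : ℝ}
    (hc : ∀ x ∈ s, ∀ y ∈ t, S (f x) (g y) = c) :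
    ∑ i, (∑ x ∈ s, u i (f x)) * ∑ y ∈ t, v i (g y) = #s * #t * c := by
  calc ∑ i, (∑ x ∈ s, u i (f x)) * ∑ y ∈ t, v i (g y)
      = ∑ x ∈ s, ∑ y ∈ t, S (f x) (g y) := by
        simp only [sum_mul_sum, hS]
        rw [sum_comm]
        exact sum_congr rfl fun x _ => sum_comm
    _ = ∑ _x ∈ s, ∑ _y ∈ t, c := sum_congr rfl fun x hx => sum_congr rfl (hc x hx)
    _ = #s * #t * c := by simp only [sum_const, nsmul_eq_mul, mul_assoc]

variable {κ : Type*} [Fintype κ] [DecidableEq κ]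

theorem card_filter_none_notMem : #{z : Finset (Option κ) | none ∉ z} = 2 ^ Fintype.card κ := by
  have : ({z | none ∉ z} : Finset (Finset (Option κ))) = powerset (univ.map .some) := by
    ext z
    rw [mem_filter_univ, mem_powerset]
    refine ⟨fun hz => ?_, fun hz h => by simpa using hz h⟩
    rintro (_ | x) hx
    exacts [absurd hx hz, mem_map_of_mem _ (mem_univ x)]
  rw [this, card_powerset, card_map, card_univ]

theorem card_filter_none_mem : #{z : Finset (Option κ) | none ∈ z} = 2 ^ Fintype.card κ := by
  have := card_filter_add_card_filter_not (s := (univ : Finset (Finset (Option κ)))) (none ∈ ·)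
  rw [card_filter_none_notMem, card_univ, Fintype.card_finset, Fintype.card_option,
    pow_succ] at this
  omega

theorem oddCutSlack_le (a : {a : Finset (Base κ) // Odd #a})
    (τ : {τ : Equiv.Perm (Base κ) // Function.Involutive τ}) :
    oddCutSlack a τ ≤ 4 * Fintype.card κ + 5 := by
  have : cutCost a.1 τ.1 ≤ 4 * Fintype.card κ + 5 := (card_le_univ _).trans_eq card_base
  have : (cutCost a.1 τ.1 : ℝ) ≤ 4 * Fintype.card κ + 5 := by exact_mod_cast this
  rw [oddCutSlack]
  linarith

theorem sum_massOff_row_mul_massOff_col_le {u : {a : Finset (Base κ) // Odd #a} → ℝ}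
    {v : {τ : Equiv.Perm (Base κ) // Function.Involutive τ} → ℝ} (hu : 0 ≤ u) (hv : 0 ≤ v)
    (huv : ∀ a τ, u a * v τ ≤ oddCutSlack a τ) :
    ∑ g, massOff (fun z => u (row g z)) none * massOff (fun w => v (col g w)) none ≤
      1 / 200 * ∑ g, (∑ z, u (row g z)) * massOff (fun w => v (col g w)) none +
      1 / 200 * ∑ g, massOff (fun z => u (row g z)) none * ∑ w, v (col g w) +
      121 / 250 * ∑ g, massOn (fun z => u (row g z)) none * massOn (fun w => v (col g w)) none +
      8 * (4 * Fintype.card κ + 5) * (Fintype.card (Equiv.Perm (Base κ)) * 4 ^ Fintype.card κ) *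
        Real.exp (-((Fintype.card κ + 1) / 176400)) := by
  have : Nonempty {a : Finset (Base κ) // Odd #a} := ⟨row 1 ∅⟩
  have : Nonempty {τ : Equiv.Perm (Base κ) // Function.Involutive τ} := ⟨col 1 ∅⟩
  obtain ⟨a, ha⟩ := Finite.exists_max u
  obtain ⟨τ, hτ⟩ := Finite.exists_max v
  have hD : u a * v τ ≤ 4 * Fintype.card κ + 5 := (huv a τ).trans (oddCutSlack_le a τ)
  have key := (isPentagonal_row_col hu hv huv).sum_massOff_mul_massOff_le (ε := 1 / 21)
    (δ := 1 / 200) (by norm_num) (by norm_num) (by norm_num) (fun g z => ha (row g z))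
    fun g w => hτ (col g w)
  rw [Fintype.card_option, Nat.cast_succ,
    show (1 / 21 : ℝ) ^ 2 * (1 / 200 * (Fintype.card κ + 1)) / 2 =
      (Fintype.card κ + 1) / 176400 by ring] at key
  have error := mul_le_mul_of_nonneg_right hD
    (by positivity : 0 ≤ 8 * (Fintype.card (Equiv.Perm (Base κ)) * 4 ^ Fintype.card κ) *
      Real.exp (-((Fintype.card κ + 1) / 176400)))
  rw [pow_succ (4 : ℝ)] at key
  norm_num at key error ⊢
  linarith

theorem le_card_mul_of_hasNonnegFactorization_oddCutSlack {I : Type*} [Fintype I]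
    (h : HasNonnegFactorization I (oddCutSlack (V := Base κ))) :
    3 / 1000 ≤ Fintype.card I * (4 * Fintype.card κ + 5) *
      Real.exp (-((Fintype.card κ + 1) / 176400)) := by
  obtain ⟨u, v, hu, hv, hS⟩ := h
  have huv (i : I) (a) (τ) : u i a * v i τ ≤ oddCutSlack a τ := by
    rw [hS]
    exact single_le_sum (f := fun i => u i a * v i τ) (fun i _ => mul_nonneg (hu i a) (hv i τ))
      (mem_univ i)
  have key := sum_le_sum fun i (_ : i ∈ univ) =>
    sum_massOff_row_mul_massOff_col_le (hu i) (hv i) (huv i)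
  have mass (g : Equiv.Perm (Base κ)) {s t : Finset (Finset (Option κ))} (c : ℝ)
      (hc : ∀ z ∈ s, ∀ w ∈ t, (if none ∈ z ∧ none ∈ w then 4 else 2 : ℝ) = c) :
      ∑ i, (∑ z ∈ s, u i (row g z)) * ∑ w ∈ t, v i (col g w) = #s * #t * c :=
    sum_sum_mul_sum_eq_of_factorization hS fun z hz w hw =>
      (oddCutSlack_row_col_self g z w).trans (hc z hz w hw)
  have on_on (g : Equiv.Perm (Base κ)) :=
    mass g (s := {z | none ∈ z}) (t := {w | none ∈ w}) 4 (by grind)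
  have off_off (g : Equiv.Perm (Base κ)) :=
    mass g (s := {z | none ∉ z}) (t := {w | none ∉ w}) 2 (by grind)
  have all_off (g : Equiv.Perm (Base κ)) :=
    mass g (s := univ) (t := {w | none ∉ w}) 2 (by grind)
  have off_all (g : Equiv.Perm (Base κ)) :=
    mass g (s := {z | none ∉ z}) (t := univ) 2 (by grind)
  simp only [sum_add_distrib, ← mul_sum, sum_comm (γ := I) (α := Equiv.Perm (Base κ)), massOn,
    massOff, on_on, off_off, all_off, off_all, card_filter_none_mem, card_filter_none_notMem,
    sum_const, card_univ, Fintype.card_finset, Fintype.card_option, nsmul_eq_mul, pow_succ,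
    Nat.cast_mul, Nat.cast_pow, Nat.cast_ofNat] at key
  have four_pow : (4 : ℝ) ^ Fintype.card κ = 2 ^ Fintype.card κ * 2 ^ Fintype.card κ := by
    rw [← mul_pow]
    norm_num
  have hΩ : (0 : ℝ) < Fintype.card (Equiv.Perm (Base κ)) * 4 ^ Fintype.card κ := by positivity
  refine le_of_mul_le_mul_right ?_ hΩ
  rw [four_pow] at key ⊢
  linarith

end NonnegRank

section Generators

/-- The polyhedron generated by the points `v i` with `c i = 1` and the directions `v i` with
`c i = 0`. -/
def generatedPolyhedron {ι K : Type} [Fintype K] (v : K → ι → ℝ) (c : K → ℝ) : Set (ι → ℝ) :=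
  Fintype.linearCombination ℝ v '' {y | 0 ≤ y ∧ ∑ i, c i * y i = 1}

theorem convex_generatedPolyhedron {ι K : Type} [Fintype K] (v : K → ι → ℝ) (c : K → ℝ) :
    Convex ℝ (generatedPolyhedron v c) := by
  have : Convex ℝ {y : K → ℝ | 0 ≤ y ∧ ∑ i, c i * y i = 1} := by
    refine fun y hy z hz s t hs ht hst => ⟨?_, ?_⟩
    · exact add_nonneg (smul_nonneg hs hy.1) (smul_nonneg ht hz.1)
    · simp only [Pi.add_apply, Pi.smul_apply, smul_eq_mul, mul_add, mul_left_comm (c _),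
        sum_add_distrib, ← mul_sum, hy.2, hz.2, mul_one, hst]
  exact this.linear_image _

theorem isEF_generatedPolyhedron {ι K : Type} [Fintype ι] [Fintype K] (v : K → ι → ℝ)
    (c : K → ℝ) : IsEF (generatedPolyhedron v c) (Fintype.card K) := by
  let e : (K → ℝ) ≃ₗ[ℝ] (Fin (Fintype.card K) → ℝ) :=
    LinearEquiv.funCongrLeft ℝ ℝ (Fintype.equivFin K).symm
  refine ⟨Fintype.card K, 1, -1, 0, fun _ => e c, 1,
    (Fintype.linearCombination ℝ v ∘ₗ e.symm.toLinearMap).toAffineMap, ?_⟩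
  refine (Set.image_comp (Fintype.linearCombination ℝ v) e.symm _).trans ?_
  rw [generatedPolyhedron, e.symm.image_eq_preimage_symm]
  congr 1
  ext y
  have dotProduct_e : e c ⬝ᵥ e y = ∑ i, c i * y i :=
    (Fintype.equivFin K).symm.sum_comp fun i => c i * y i
  have nonneg_e : 0 ≤ e y ↔ 0 ≤ y :=
    (Fintype.equivFin K).symm.forall_congr_right (q := fun i => 0 ≤ y i)
  rw [Set.mem_ofPred_eq, ← nonneg_e, ← dotProduct_e]
  refine and_congr (forall_congr' fun r => ?_) ⟨fun h => h 0, fun h _ => h⟩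
  rw [Matrix.neg_mulVec, Matrix.one_mulVec]
  exact neg_nonpos

end Generators

section Polyhedron

variable {n m : ℕ}

/-- The generating point of `Ppoly` given by a schedule and a bound on its loads. -/
def schedPoint (σ : Fin n → Fin m) (t : ℕ) : Option (Fin m × Fin n) → ℝ :=
  fun q => Option.elim q (t : ℝ) (fun ij => assignVec σ ij)

theorem schedPoint_mem {p : Fin n → ℕ} {σ : Fin n → Fin m} {t : ℕ}
    (h : ∀ i, load p σ i ≤ t) : schedPoint σ t ∈ Ppoly n m p :=
  subset_convexHull ℝ _ ⟨σ, t, h, rfl⟩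

theorem schedPoint_add (σ : Fin n → Fin m) (s t : ℕ) :
    schedPoint σ (s + t) = schedPoint σ s + (t : ℝ) • Pi.single none 1 := by
  funext q
  cases q <;> simp [schedPoint]

theorem load_le_makespan (p : Fin n → ℕ) (σ : Fin n → Fin m) (i : Fin m) :
    load p σ i ≤ makespan p σ := le_sup (f := load p σ) (mem_univ i)

theorem schedPoint_add_smul_mem (p : Fin n → ℕ) (σ : Fin n → Fin m) {s : ℝ} (hs : 0 ≤ s) :
    schedPoint σ (makespan p σ) + s • Pi.single none 1 ∈ Ppoly n m p := by
  obtain ⟨k, hk⟩ := exists_nat_ge s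
  have hk' : (0 : ℝ) < (k + 1 : ℕ) := by positivity
  have higher : schedPoint σ (makespan p σ) + ((k + 1 : ℕ) : ℝ) • Pi.single none 1 ∈
      Ppoly n m p := by
    rw [← schedPoint_add]
    exact schedPoint_mem fun i => (load_le_makespan p σ i).trans (Nat.le_add_right _ _)
  have between := (convex_convexHull ℝ _).add_smul_mem (schedPoint_mem (load_le_makespan p σ))
    higher (t := s / (k + 1 : ℕ)) ⟨by positivity, (div_le_one hk').2 (by push_cast; linarith)⟩
  rwa [smul_smul, div_mul_cancel₀ _ hk'.ne'] at between

/-- The generators of `Ppoly`: the points of the schedules at their makespans, together with the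
direction `none` in which the makespan coordinate increases. -/
def schedGenerator (p : Fin n → ℕ) : Option (Fin n → Fin m) → Option (Fin m × Fin n) → ℝ
  | none => Pi.single none 1
  | some σ => schedPoint σ (makespan p σ)

theorem Ppoly_eq_generatedPolyhedron (p : Fin n → ℕ) :
    Ppoly n m p = generatedPolyhedron (schedGenerator p) fun o => if o.isSome then 1 else 0 := by
  refine (convexHull_min ?_ (convex_generatedPolyhedron _ _)).antisymm ?_
  · rintro _ ⟨σ, t, ht, rfl⟩
    obtain ⟨k, rfl⟩ := Nat.exists_eq_add_of_le
      (show makespan p σ ≤ t from Finset.sup_le fun i _ => ht i)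
    refine ⟨fun o => o.elim (k : ℝ) (Pi.single σ 1), ⟨?_, ?_⟩, ?_⟩
    · rintro (_ | σ')
      · exact Nat.cast_nonneg k
      · exact (Pi.single_nonneg (α := fun _ => ℝ)).2 zero_le_one σ'
    · simp [Fintype.sum_option]
    · refine Eq.trans ?_ (schedPoint_add σ (makespan p σ) k).symm
      simp [Fintype.linearCombination_apply, Fintype.sum_option, schedGenerator, add_comm,
        Pi.single_apply]
  · rintro _ ⟨y, ⟨hy, hy₁⟩, rfl⟩
    have sum_eq_one : ∑ σ, y (some σ) = 1 := by simpa [Fintype.sum_option] using hy₁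
    have combination : Fintype.linearCombination ℝ (schedGenerator p) y = ∑ σ, y (some σ) •
        (schedPoint σ (makespan p σ) + y none • Pi.single none 1) := by
      simp only [Fintype.linearCombination_apply, Fintype.sum_option, schedGenerator, smul_add,
        sum_add_distrib, ← sum_smul, sum_eq_one, one_smul]
      exact add_comm _ _
    rw [combination]
    exact (convex_convexHull ℝ _).sum_mem (fun σ _ => hy _) sum_eq_one fun σ _ =>
      schedPoint_add_smul_mem p σ (hy _)

theorem isEF_xc_Ppoly (p : Fin n → ℕ) : IsEF (Ppoly n m p) (xc (Ppoly n m p)) := by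
  refine Nat.sInf_mem (s := {k | IsEF (Ppoly n m p) k}) ⟨Fintype.card (Option (Fin n → Fin m)), ?_⟩
  exact Ppoly_eq_generatedPolyhedron p ▸ isEF_generatedPolyhedron _ _

end Polyhedron

section Instance

variable {V : Type*}

/-- The jobs of the instance: two unit jobs and one job of size two for each element of `V`. -/
abbrev Job (V : Type*) : Type _ := (V × Bool) ⊕ V

/-- The machines of the instance: two for each element of `V`. -/
abbrev Machine (V : Type*) : Type _ := V × Bool

/-- The processing times of the jobs. -/
def jobSize : Job V → ℕ := Sum.elim 1 2

theorem jobSize_eq_one_or_two (j : Job V) : jobSize j = 1 ∨ jobSize j = 2 :=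
  j.rec (fun _ => .inl rfl) (fun _ => .inr rfl)

variable [Fintype V] [DecidableEq V]

/-- The load of the machine `c`, before jobs and machines are numbered. -/
def machineLoad (s : Job V → Machine V) (c : Machine V) : ℕ :=
  ∑ j, if s j = c then jobSize j else 0

theorem two_le_of_machineLoad_le [Nonempty V] {s : Job V → Machine V} {t : ℕ}
    (h : ∀ c, machineLoad s c ≤ t) : 2 ≤ t := by
  obtain ⟨v⟩ := ‹Nonempty V›
  calc 2 = if s (.inr v) = s (.inr v) then jobSize (.inr v : Job V) else 0 := (if_pos rfl).symm
    _ ≤ machineLoad s (s (.inr v)) :=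
      single_le_sum (f := fun j => if s j = s (.inr v) then jobSize j else 0)
        (fun _ _ => Nat.zero_le _) (mem_univ _)
    _ ≤ t := h _

theorem machineLoad_eq_two {s : Job V → Machine V} (h : ∀ c, machineLoad s c ≤ 2)
    (c : Machine V) : machineLoad s c = 2 := by
  have total : ∑ c, machineLoad s c = ∑ _c : Machine V, 2 := by
    simp only [machineLoad]
    rw [sum_comm]
    simp [jobSize]
    ring
  exact (sum_eq_sum_iff_of_le fun c _ => h c).1 total c (mem_univ c)

theorem even_card_unit_jobs {s : Job V → Machine V} {c : Machine V} (h : Even (machineLoad s c)) :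
    Even #{j | s (.inl j) = c} := by
  have : machineLoad s c = #{j | s (.inl j) = c} + #{v | s (.inr v) = c} * 2 := by
    rw [machineLoad, Fintype.sum_sum_type, ← sum_filter, ← sum_filter, card_eq_sum_ones]
    exact congrArg₂ _ rfl (sum_const_nat fun _ _ => rfl)
  rw [this] at h
  exact (Nat.even_add.1 h).2 (even_two.mul_left _)

/-- The number of unit jobs that a schedule moves across the boundary of `D`, a set both of unit
jobs and of machines. -/
def crossing (D : Finset (V × Bool)) (s : Job V → Machine V) : ℕ :=
  #{j | ¬(j ∈ D ↔ s (.inl j) ∈ D)}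

theorem even_card_of_crossing_eq_zero {D : Finset (V × Bool)} {s : Job V → Machine V}
    (h : ∀ c, machineLoad s c ≤ 2) (hs : crossing D s = 0) : Even #D := by
  have mem_iff : ∀ j, j ∈ D ↔ s (.inl j) ∈ D := by
    simpa [crossing, filter_eq_empty_iff] using hs
  rw [card_eq_sum_card_fiberwise (f := fun j => s (.inl j)) fun j hj => (mem_iff j).1 hj]
  refine even_sum _ fun c hc => ?_
  have fiber : D.filter (fun j => s (.inl j) = c) = univ.filter fun j => s (.inl j) = c := by
    ext j
    simp only [mem_filter, mem_univ, true_and, and_iff_right_iff_imp]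
    rintro rfl
    exact (mem_iff j).2 hc
  rw [fiber]
  exact even_card_unit_jobs (machineLoad_eq_two h c ▸ even_two)

theorem three_le_crossing_add {D : Finset (V × Bool)} (hD : Odd #D) {s : Job V → Machine V}
    {t : ℕ} (h : ∀ c, machineLoad s c ≤ t) : 3 ≤ crossing D s + t := by
  obtain ⟨⟨v, -⟩, -⟩ := card_pos.1 hD.pos
  have := Nonempty.intro v
  have two_le := two_le_of_machineLoad_le h
  by_contra! hlt
  obtain rfl : t = 2 := by omega
  exact Nat.not_even_iff_odd.2 hD (even_card_of_crossing_eq_zero h (by omega))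

end Instance

section PairSchedule

variable {V : Type*} {τ r : V → V}

theorem exists_representative (hτ : Function.Involutive τ) :
    ∃ r : V → V, (∀ v, r (τ v) = r v) ∧ ∀ v, r v = v ∨ r v = τ v := by
  classical
  let := linearOrderOfSTO (WellOrderingRel (α := V))
  exact ⟨fun v => min v (τ v), fun v => by simp only [hτ v, min_comm], fun v => min_choice _ _⟩

variable [DecidableEq V]

/-- The schedule of an involution `τ` whose orbits have the representatives `r v`: the unit jobs of
an orbit are run on the machines of its representative, in parallel if the orbit has two elements,
and the jobs of size two fill the remaining machines. -/
def pairSchedule (τ r : V → V) : Job V → Machine V :=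
  Sum.elim (fun j => (r j.1, j.2 && decide (τ j.1 ≠ j.1)))
    fun v => if r v = v then (τ v, true) else (v, false)

variable [Fintype V]

theorem machineLoad_pairSchedule_le (hτ : Function.Involutive τ) (hr : ∀ v, r (τ v) = r v)
    (hr' : ∀ v, r v = v ∨ r v = τ v) (c : Machine V) : machineLoad (pairSchedule τ r) c ≤ 2 := by
  obtain ⟨i, b⟩ := c
  simp only [machineLoad, Fintype.sum_sum_type, Fintype.sum_prod_type, Fintype.sum_bool, jobSize,
    pairSchedule, Sum.elim_inl, Sum.elim_inr, ← sum_add_distrib]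
  rw [← sum_subset (subset_univ {i, τ i})]
  · by_cases h : τ i = i
    · have := hr' i
      cases b <;> simp_all
    · rw [sum_pair (Ne.symm h)]
      rcases hr' i with h' | h' <;> cases b <;> simp [hτ i, hr, h, h', Ne.symm h]
  · intro v _ hv
    simp only [mem_insert, mem_singleton, not_or] at hv
    have τ_ne : τ v ≠ i := fun h => hv.2 (by rw [← h, hτ])
    have r_ne : r v ≠ i := by
      rcases hr' v with h | h <;> rw [h]
      exacts [hv.1, τ_ne]
    by_cases h : r v = v <;> simp [h, τ_ne, r_ne, hv.1]

theorem crossing_pairSchedule {τ : Equiv.Perm V} (hτ : Function.Involutive τ)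
    (hr : ∀ v, r (τ v) = r v) (hr' : ∀ v, r v = v ∨ r v = τ v) (a : Finset V) :
    crossing (a ×ˢ {true}) (pairSchedule τ r) = cutCost a τ := by
  have crossing_eq : crossing (a ×ˢ {true}) (pairSchedule τ r) =
      #{v | ¬(v ∈ a ↔ r v ∈ a ∧ τ v ≠ v)} := by
    rw [crossing, card_filter, Fintype.sum_prod_type, card_filter]
    simp [pairSchedule]
  rw [crossing_eq]
  refine card_nbij' (fun v => if v ∈ a then v else τ v) (fun v => if r v = v then τ v else v)
    ?_ ?_ ?_ ?_ <;>
  · intro v _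
    grind [hτ v, hr v, hr' v]

end PairSchedule

section Slack

/-- The processing times of the jobs of the instance, numbered. -/
def procTime (V : Type*) [Fintype V] : Fin (Fintype.card (Job V)) → ℕ :=
  jobSize ∘ (Fintype.equivFin (Job V)).symm

/-- The polyhedron `P(J, M)` of the instance. -/
abbrev instancePolyhedron (V : Type*) [Fintype V] :
    Set (Option (Fin (Fintype.card (Machine V)) × Fin (Fintype.card (Job V))) → ℝ) :=
  Ppoly (Fintype.card (Job V)) (Fintype.card (Machine V)) (procTime V)

variable {V : Type*} [Fintype V]

/-- The numbering of jobs and machines, applied to schedules. -/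
def schedEquiv : (Job V → Machine V) ≃
    (Fin (Fintype.card (Job V)) → Fin (Fintype.card (Machine V))) :=
  (Fintype.equivFin (Job V)).arrowCongr (Fintype.equivFin (Machine V))

variable [DecidableEq V]

theorem load_schedEquiv (s : Job V → Machine V) (c : Machine V) :
    load (procTime V) (schedEquiv s) (Fintype.equivFin _ c) = machineLoad s c := by
  rw [load, machineLoad, ← (Fintype.equivFin (Job V)).sum_comp]
  simp [schedEquiv, procTime]

theorem load_schedEquiv_le_iff {s : Job V → Machine V} {t : ℕ} :
    (∀ i, load (procTime V) (schedEquiv s) i ≤ t) ↔ ∀ c, machineLoad s c ≤ t := by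
  rw [← (Fintype.equivFin (Machine V)).forall_congr_right]
  simp only [load_schedEquiv]

theorem makespan_schedEquiv_le_iff {s : Job V → Machine V} {t : ℕ} :
    makespan (procTime V) (schedEquiv s) ≤ t ↔ ∀ c, machineLoad s c ≤ t := by
  simp only [makespan, Finset.sup_le_iff, mem_univ, true_imp_iff, load_schedEquiv_le_iff]

theorem exists_schedule_of_involutive {τ : Equiv.Perm V} (hτ : Function.Involutive τ) :
    ∃ s : Job V → Machine V, (∀ c, machineLoad s c ≤ 2) ∧
      ∀ a : Finset V, crossing (a ×ˢ {true}) s = cutCost a τ := by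
  obtain ⟨r, hr, hr'⟩ := exists_representative hτ
  exact ⟨pairSchedule τ r, machineLoad_pairSchedule_le hτ hr hr', crossing_pairSchedule hτ hr hr'⟩

/-- The number of unit jobs moved across the boundary of `D`, plus the makespan, minus `3`. -/
def cutFunctional (D : Finset (V × Bool)) :
    (Option (Fin (Fintype.card (Machine V)) × Fin (Fintype.card (Job V))) → ℝ) →ᵃ[ℝ] ℝ :=
  (LinearMap.proj none + ∑ j : V × Bool, ∑ c : Machine V,
    (if ¬(j ∈ D ↔ c ∈ D) then (1 : ℝ) else 0) •
      LinearMap.proj (some (Fintype.equivFin _ c, Fintype.equivFin _ (.inl j)))).toAffineMap +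
    AffineMap.const ℝ _ (-3)

theorem cutFunctional_schedPoint (D : Finset (V × Bool)) (s : Job V → Machine V) (t : ℕ) :
    cutFunctional D (schedPoint (schedEquiv s) t) = crossing D s + t - 3 := by
  have assign (j c) : schedPoint (schedEquiv s) t
      (some (Fintype.equivFin _ c, Fintype.equivFin _ j)) = if s j = c then 1 else 0 := by
    simp [schedPoint, assignVec, schedEquiv]
  have bound : schedPoint (schedEquiv s) t none = t := rfl
  simp only [cutFunctional, AffineMap.coe_add, LinearMap.coe_toAffineMap, AffineMap.coe_const,
    Pi.add_apply, Function.const_apply, LinearMap.add_apply, LinearMap.sum_apply,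
    LinearMap.smul_apply, LinearMap.proj_apply, assign, bound, smul_eq_mul, mul_ite, mul_one,
    mul_zero, sum_ite_eq, mem_univ, if_true, sum_boole, crossing]
  ring

theorem cutFunctional_nonneg {D : Finset (V × Bool)} (hD : Odd #D) :
    ∀ z ∈ instancePolyhedron V, 0 ≤ cutFunctional D z := by
  refine fun z hz => convexHull_min (t := cutFunctional D ⁻¹' Set.Ici 0) ?_
    ((convex_Ici 0).affine_preimage _) hz
  rintro _ ⟨σ, t, ht, rfl⟩
  obtain ⟨s, rfl⟩ := schedEquiv.surjective σ
  have three_le : (3 : ℝ) ≤ crossing D s + t := by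
    exact_mod_cast three_le_crossing_add hD (load_schedEquiv_le_iff.1 ht)
  exact (sub_nonneg.2 three_le).trans_eq (cutFunctional_schedPoint D s t).symm

theorem hasNonnegFactorization_oddCutSlack :
    HasNonnegFactorization (Option (Fin (xc (instancePolyhedron V)))) (oddCutSlack (V := V)) := by
  choose s hs crossing_s using fun τ : {τ : Equiv.Perm V // Function.Involutive τ} =>
    exists_schedule_of_involutive τ.2
  have odd_card (a : {a : Finset V // Odd #a}) : Odd #(a.1 ×ˢ {true}) := by
    rw [card_product, card_singleton, mul_one]
    exact a.2
  convert (isEF_xc_Ppoly (procTime V)).hasNonnegFactorization_slack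
    (fun a : {a : Finset V // Odd #a} => cutFunctional_nonneg (odd_card a))
    (fun τ => schedPoint_mem (load_schedEquiv_le_iff.2 (hs τ))) using 3 with a τ
  rw [cutFunctional_schedPoint, crossing_s, oddCutSlack]
  push_cast
  ring

end Slack

section Growth

theorem optMakespan_procTime {V : Type*} [Fintype V] [Nonempty V] :
    optMakespan (Fintype.card (Job V)) (Fintype.card (Machine V)) (procTime V) = 2 := by
  classical
  obtain ⟨s, hs, -⟩ := exists_schedule_of_involutive (V := V) (τ := 1) fun _ => rfl
  have mem : makespan (procTime V) (schedEquiv s) ∈ {t | ∃ σ, makespan (procTime V) σ = t} :=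
    ⟨_, rfl⟩
  refine le_antisymm ((Nat.sInf_le mem).trans (makespan_schedEquiv_le_iff.2 hs))
    (le_csInf ⟨_, mem⟩ ?_)
  rintro _ ⟨σ, rfl⟩
  obtain ⟨s, rfl⟩ := schedEquiv.surjective σ
  exact two_le_of_machineLoad_le (makespan_schedEquiv_le_iff.1 le_rfl)

variable {κ : Type*} [Fintype κ]

theorem two_pow_le_xc_instancePolyhedron {n : ℕ} (hn : 1 ≤ n)
    (hκ : Fintype.card κ + 1 = 7056000 * n) :
    (2 : ℝ) ^ n ≤ xc (instancePolyhedron (Base κ)) := by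
  classical
  have hκ' : (Fintype.card κ + 1 : ℝ) = 7056000 * n := by exact_mod_cast hκ
  have lower := le_card_mul_of_hasNonnegFactorization_oddCutSlack
    (hasNonnegFactorization_oddCutSlack (V := Base κ))
  have exp_large : 2 ^ n * 2 ^ 38 * n ≤ Real.exp (40 * n) := by
    have two_le : (2 : ℝ) ≤ Real.exp 1 := by linarith [Real.add_one_le_exp 1]
    have n_le : (n : ℝ) ≤ 2 ^ n := by exact_mod_cast Nat.lt_two_pow_self.le
    calc (2 : ℝ) ^ n * 2 ^ 38 * n ≤ 2 ^ n * 2 ^ (38 * n) * 2 ^ n := by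
          gcongr
          exacts [one_le_two, by omega]
      _ = 2 ^ (40 * n) := by ring
      _ ≤ Real.exp 1 ^ (40 * n) := by gcongr
      _ = Real.exp (40 * n) := by rw [← Real.exp_nat_mul]; push_cast; ring_nf
  rw [hκ', Fintype.card_option, Fintype.card_fin, Real.exp_neg, ← div_eq_mul_inv,
    le_div_iff₀ (Real.exp_pos _), show (7056000 * n : ℝ) / 176400 = 40 * n by ring] at lower
  have cancelled : (3 / 1000 : ℝ) * (2 ^ n * 2 ^ 38) ≤
      (xc (instancePolyhedron (Base κ)) + 1) * (5 * 7056000) := by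
    refine le_of_mul_le_mul_right ?_ (show (0 : ℝ) < n by exact_mod_cast hn)
    calc (3 / 1000 : ℝ) * (2 ^ n * 2 ^ 38) * n = 3 / 1000 * (2 ^ n * 2 ^ 38 * n) := by ring
      _ ≤ 3 / 1000 * Real.exp (40 * n) := by gcongr
      _ ≤ (xc (instancePolyhedron (Base κ)) + 1 : ℕ) * (4 * Fintype.card κ + 5) := lower
      _ ≤ (xc (instancePolyhedron (Base κ)) + 1) * (5 * (Fintype.card κ + 1)) := by
        push_cast
        gcongr
        linarith
      _ = (xc (instancePolyhedron (Base κ)) + 1) * (5 * 7056000) * n := by rw [hκ']; ring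
  linarith [one_le_pow₀ (n := n) (one_le_two (α := ℝ))]

theorem makespan_large_xc_general : ∃ C : ℕ, 1 ≤ C ∧ ∀ n : ℕ, 1 ≤ n →
    ∃ (nJ m : ℕ) (p : Fin nJ → ℕ), nJ ≤ C * n ∧ m ≤ C * n ∧ (∀ j, p j = 1 ∨ p j = 2) ∧
      optMakespan nJ m p = 2 ∧ (2 : ℝ) ^ n ≤ xc (Ppoly nJ m p) := by
  refine ⟨15 * 7056000, by norm_num, fun n hn => ?_⟩
  let κ := Fin (7056000 * n - 1)
  have hκ : Fintype.card κ + 1 = 7056000 * n := by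
    rw [Fintype.card_fin]
    omega
  refine ⟨_, _, procTime (Base κ), ?_, ?_, fun j => jobSize_eq_one_or_two _, optMakespan_procTime,
    two_pow_le_xc_instancePolyhedron hn hκ⟩
  · rw [Fintype.card_sum, Fintype.card_prod, Fintype.card_bool, card_base]
    omega
  · rw [Fintype.card_prod, Fintype.card_bool, card_base]
    omega

end Growth

/-- There are instances of `P||C_max` with `O(n)` jobs and machines, processing times in
`{1,2}` and optimal makespan `2`, such that `xc(P(J,M)) ≥ 2^(c·n/log n)`. -/
theorem makespan_large_xc :
    ∃ c C : ℝ, 0 < c ∧ 1 ≤ C ∧ ∀ n : ℕ, 2 ≤ n →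
      ∃ (nJ m : ℕ) (p : Fin nJ → ℕ),
        (nJ : ℝ) ≤ C * n ∧ (m : ℝ) ≤ C * n ∧
        (∀ j, p j = 1 ∨ p j = 2) ∧
        optMakespan nJ m p = 2 ∧
        (2 : ℝ) ^ (c * n / Real.log n) ≤ (xc (Ppoly nJ m p) : ℝ) := by
  obtain ⟨C, hC, h⟩ := makespan_large_xc_general
  refine ⟨Real.log 2, C, Real.log_pos one_lt_two, by exact_mod_cast hC, fun n hn => ?_⟩
  obtain ⟨nJ, m, p, hnJ, hm, hp, hopt, hxc⟩ := h n (by omega)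
  refine ⟨nJ, m, p, by exact_mod_cast hnJ, by exact_mod_cast hm, hp, hopt, le_trans ?_ hxc⟩
  have log_le : Real.log 2 ≤ Real.log n := Real.log_le_log two_pos (by exact_mod_cast hn)
  rw [← Real.rpow_natCast]
  refine Real.rpow_le_rpow_of_exponent_le one_le_two ?_
  rw [div_le_iff₀ ((Real.log_pos one_lt_two).trans_le log_le), mul_comm]
  gcongr
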